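/- The function p(y) = -2(y³ - 3)/(y(y³ + 6)) satisfies the Painlevé-II equation with parameter m = -2, i.e. p''(y) - 2 p(y)³ - (2/3) y p(y) + (2/3)(-2) = 0 for all y ∈ ℝ with y ≠ 0 and y³ + 6 ≠ 0. -/

import Mathlib

/-- The function `p(y) = -2(y³-3)/(y(y³+6))` satisfies the Painlevé-II equation
with parameter `m = -2` for all `y` with `y ≠ 0` and `y³ + 6 ≠ 0`. -/
theorem painleveII_rational_second_order :
    ∀ y : ℝ, y ≠ 0 → y ^ 3 + 6 ≠ 0 →
      deriv (deriv (fun t : ℝ => -2 * (t ^ 3 - 3) / (t * (t ^ 3 + 6)))) y -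
          2 * (-2 * (y ^ 3 - 3) / (y * (y ^ 3 + 6))) ^ 3 -
          (2 / 3) * y * (-2 * (y ^ 3 - 3) / (y * (y ^ 3 + 6))) + (2 / 3) * (-2) = 0 := by
  intro y hy hz
  have hd : ∀ t : ℝ, HasDerivAt (fun t : ℝ => t * (t ^ 3 + 6)) (4 * t ^ 3 + 6) t := by
    intro t
    refine ((hasDerivAt_id' t).mul ((hasDerivAt_pow 3 t).add_const 6)).congr_deriv ?_
    norm_num
    ring
  have h1 : ∀ t : ℝ, t ≠ 0 → t ^ 3 + 6 ≠ 0 →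
      deriv (fun t : ℝ => -2 * (t ^ 3 - 3) / (t * (t ^ 3 + 6))) t =
        (2 * t ^ 6 - 48 * t ^ 3 - 36) / (t * (t ^ 3 + 6)) ^ 2 := by
    intro t ht hs
    have hn : HasDerivAt (fun t : ℝ => -2 * (t ^ 3 - 3)) (-2 * (3 * t ^ 2)) t := by
      simpa using ((hasDerivAt_pow 3 t).sub_const 3).const_mul (-2)
    rw [(hn.fun_div (hd t) (mul_ne_zero ht hs)).deriv]
    congr 1
    ring
  have hc : Continuous (fun t : ℝ => t ^ 3 + 6) := by fun_prop
  have h2 : deriv (fun t : ℝ => -2 * (t ^ 3 - 3) / (t * (t ^ 3 + 6))) =ᶠ[nhds y]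
      fun t : ℝ => (2 * t ^ 6 - 48 * t ^ 3 - 36) / (t * (t ^ 3 + 6)) ^ 2 := by
    filter_upwards [isOpen_ne.mem_nhds hy, hc.continuousAt.eventually_ne hz] with t ht hs
    exact h1 t ht hs
  have hn2 : HasDerivAt (fun t : ℝ => 2 * t ^ 6 - 48 * t ^ 3 - 36)
      (12 * y ^ 5 - 144 * y ^ 2) y := by
    refine ((((hasDerivAt_pow 6 y).const_mul 2).sub
      ((hasDerivAt_pow 3 y).const_mul 48)).sub_const 36).congr_deriv ?_
    norm_num
    ring
  rw [h2.deriv_eq, (hn2.fun_div ((hd y).fun_pow 2) (pow_ne_zero 2 (mul_ne_zero hy hz))).deriv]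
  field_simp
  ring
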